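/- arXiv:2108.12220 — 3 statements merged into one kernel-verified Lean document; each statement's English description precedes it below -/
import Mathlib

section
/- Let α be purely imaginary and let u : ℝ → ℂ be twice continuously differentiable and satisfy the PII equation u''(x) = x·u(x) + 2·u(x)³ − α on ℝ. Assume there exists R > 0 such that |u(y)| ≤ |y|^{−1/4} for all y ≤ −R. Then there exists a constant C > 0 such that |u'(x)| ≤ C·(1 + |x|^{1/4}) for all x ≤ 0. -/
/-!
The bound is a Landau interpolation between `u` and `u''`: the derivative at any point of an
interval of length `h` differs from the difference quotient over that interval by at most
`h * sup ‖u''‖`. If `u = O(|x| ^ p)` and `u'' = O(|x| ^ q)` at `-∞`, the two contributions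
`|x| ^ p / h` and `|x| ^ q * h` balance for `h = |x| ^ ((p - q) / 2)`, so
`u' = O(|x| ^ ((p + q) / 2))`. When `p - q ≤ 2`, the interval `[x - h, x]` stays inside
`[2 * x, x]`, where each weight varies by at most a constant factor.
For Painlevé II, `p = -1/4`; the linear term `x u` dominates the equation, so `q = 3/4`.
-/

open Asymptotics Filter Set

section Landau

variable {E : Type*} [NormedAddCommGroup E] [NormedSpace ℝ E] {f f' f'' : ℝ → E}

lemma norm_slope_sub_deriv_le {a b x K : ℝ} (hab : a < b) (hx : x ∈ Icc a b)
    (hf : ∀ y ∈ Icc a b, HasDerivWithinAt f (f' y) (Icc a b) y)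
    (hf' : ∀ y ∈ Icc a b, HasDerivWithinAt f' (f'' y) (Icc a b) y)
    (hK : ∀ y ∈ Icc a b, ‖f'' y‖ ≤ K) :
    ‖slope f a b - f' x‖ ≤ K * (b - a) := by
  have hK₀ : 0 ≤ K := (norm_nonneg _).trans (hK x hx)
  have hba : 0 < b - a := sub_pos.2 hab
  have deriv_close : ∀ y ∈ Icc a b, ‖f' y - f' x‖ ≤ K * (b - a) := fun y hy ↦
    ((convex_Icc a b).norm_image_sub_le_of_norm_hasDerivWithin_le hf' hK hx hy).trans <| by
      gcongr
      exact Real.dist_le_of_mem_Icc hy hx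
  have mean_value : ‖(f b - b • f' x) - (f a - a • f' x)‖ ≤ K * (b - a) * ‖b - a‖ :=
    (convex_Icc a b).norm_image_sub_le_of_norm_hasDerivWithin_le
      (f := fun y ↦ f y - y • f' x)
      (fun y hy ↦ by simpa using (hf y hy).fun_sub ((hasDerivWithinAt_id y _).smul_const (f' x)))
      deriv_close (left_mem_Icc.2 hab.le) (right_mem_Icc.2 hab.le)
  have slope_eq : (b - a) • (slope f a b - f' x) = (f b - b • f' x) - (f a - a • f' x) := by
    rw [smul_sub, sub_smul_slope, vsub_eq_sub]
    module
  rw [← slope_eq, norm_smul, mul_comm, Real.norm_of_nonneg hba.le] at mean_value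
  exact le_of_mul_le_mul_right mean_value hba

lemma norm_deriv_le_of_norm_le_of_norm_deriv_two_le {a b x B K : ℝ} (hab : a < b)
    (hx : x ∈ Icc a b)
    (hf : ∀ y ∈ Icc a b, HasDerivWithinAt f (f' y) (Icc a b) y)
    (hf' : ∀ y ∈ Icc a b, HasDerivWithinAt f' (f'' y) (Icc a b) y)
    (ha : ‖f a‖ ≤ B) (hb : ‖f b‖ ≤ B) (hK : ∀ y ∈ Icc a b, ‖f'' y‖ ≤ K) :
    ‖f' x‖ ≤ 2 * B / (b - a) + K * (b - a) := by
  have hba : 0 < b - a := sub_pos.2 hab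
  have slope_le : ‖slope f a b‖ ≤ 2 * B / (b - a) := by
    rw [slope_def_module, norm_smul, norm_inv, Real.norm_of_nonneg hba.le, inv_mul_eq_div]
    gcongr
    linarith [norm_sub_le (f b) (f a)]
  calc ‖f' x‖ ≤ ‖slope f a b‖ + ‖slope f a b - f' x‖ := norm_le_norm_add_norm_sub _ _
    _ ≤ 2 * B / (b - a) + K * (b - a) :=
      add_le_add slope_le (norm_slope_sub_deriv_le hab hx hf hf' hK)

end Landau

section PowerWeights

lemma abs_rpow_le_two_rpow_mul {x y : ℝ} (hx : x < 0) (hy : y ∈ Icc (2 * x) x) (p : ℝ) :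
    |y| ^ p ≤ 2 ^ |p| * |x| ^ p := by
  have hx' : 0 < |x| := abs_pos_of_neg hx
  have hxy : |x| ≤ |y| := abs_le_abs_of_nonpos hx.le hy.2
  have hyx : |y| ≤ 2 * |x| := by
    rw [abs_of_neg hx, abs_of_neg (hy.2.trans_lt hx)]
    linarith [hy.1]
  rcases le_total 0 p with hp | hp
  · rw [abs_of_nonneg hp, ← Real.mul_rpow zero_le_two hx'.le]
    exact Real.rpow_le_rpow (abs_nonneg y) hyx hp
  · calc |y| ^ p ≤ |x| ^ p := Real.rpow_le_rpow_of_nonpos hx' hxy hp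
      _ ≤ 2 ^ |p| * |x| ^ p :=
        le_mul_of_one_le_left (by positivity) (Real.one_le_rpow one_le_two (abs_nonneg p))

variable {E : Type*} [NormedAddCommGroup E]

lemma exists_eventually_forall_Icc_norm_le {f : ℝ → E} {p : ℝ}
    (hf : f =O[atBot] fun x ↦ |x| ^ p) :
    ∃ C, ∀ᶠ x in atBot, ∀ y ∈ Icc (2 * x) x, ‖f y‖ ≤ C * |x| ^ p := by
  obtain ⟨C, hC, hfC⟩ := hf.exists_pos
  refine ⟨C * 2 ^ |p|, ?_⟩
  filter_upwards [eventually_forall_le_atBot.2 hfC.bound, eventually_lt_atBot 0] with x hfx hx y hy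
  calc ‖f y‖ ≤ C * |y| ^ p := by
        simpa only [Real.norm_of_nonneg (Real.rpow_nonneg (abs_nonneg y) p)] using hfx y hy.2
    _ ≤ C * (2 ^ |p| * |x| ^ p) := by gcongr; exact abs_rpow_le_two_rpow_mul hx hy p
    _ = C * 2 ^ |p| * |x| ^ p := (mul_assoc _ _ _).symm

lemma isBigO_abs_rpow_atBot {p q : ℝ} (hpq : p ≤ q) :
    (fun x : ℝ ↦ |x| ^ p) =O[atBot] fun x ↦ |x| ^ q := by
  refine .of_norm_eventuallyLE ?_
  filter_upwards [eventually_le_atBot (-1)] with x hx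
  rw [Real.norm_of_nonneg (Real.rpow_nonneg (abs_nonneg x) p)]
  exact Real.rpow_le_rpow_of_exponent_le (le_abs'.2 (.inl hx)) hpq

lemma exists_norm_le_mul_one_add_abs_rpow {g : ℝ → E} {p : ℝ} (hg : Continuous g)
    (hgO : g =O[atBot] fun x ↦ |x| ^ p) :
    ∃ C, 0 < C ∧ ∀ x ≤ 0, ‖g x‖ ≤ C * (1 + |x| ^ p) := by
  obtain ⟨C, hC, hgC⟩ := hgO.exists_pos
  obtain ⟨M, hM⟩ := eventually_atBot.1 hgC.bound
  obtain ⟨D, hD⟩ := (isCompact_Icc (a := M) (b := 0)).exists_bound_of_continuousOn hg.continuousOn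
  refine ⟨max C D, lt_max_of_lt_left hC, fun x hx ↦ ?_⟩
  have weight_nonneg : 0 ≤ |x| ^ p := by positivity
  have max_nonneg : 0 ≤ max C D := le_max_of_le_left hC.le
  rcases le_total x M with hxM | hMx
  · calc ‖g x‖ ≤ C * |x| ^ p := by simpa only [Real.norm_of_nonneg weight_nonneg] using hM x hxM
      _ ≤ max C D * (1 + |x| ^ p) := by gcongr; exacts [le_max_left C D, by linarith]
  · calc ‖g x‖ ≤ D := hD x ⟨hMx, hx⟩
      _ ≤ max C D := le_max_right C D
      _ ≤ max C D * (1 + |x| ^ p) := le_mul_of_one_le_right max_nonneg (by linarith)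

end PowerWeights

lemma isBigO_deriv_atBot_of_isBigO_rpow {E : Type*} [NormedAddCommGroup E] [NormedSpace ℝ E]
    {f f' f'' : ℝ → E} {p q : ℝ} (hpq : p ≤ q + 2)
    (hf : ∀ᶠ x in atBot, HasDerivAt f (f' x) x) (hf' : ∀ᶠ x in atBot, HasDerivAt f' (f'' x) x)
    (hfO : f =O[atBot] fun x ↦ |x| ^ p) (hfO'' : f'' =O[atBot] fun x ↦ |x| ^ q) :
    f' =O[atBot] fun x ↦ |x| ^ ((p + q) / 2) := by
  obtain ⟨B, hB⟩ := exists_eventually_forall_Icc_norm_le hfO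
  obtain ⟨K, hK⟩ := exists_eventually_forall_Icc_norm_le hfO''
  refine .of_bound (2 * B + K) ?_
  filter_upwards [hB, hK, eventually_forall_le_atBot.2 hf, eventually_forall_le_atBot.2 hf',
    eventually_le_atBot (-1)] with x hBx hKx hfx hfx' hx
  have hx₁ : 1 ≤ |x| := le_abs'.2 (.inl hx)
  have hx₀ : 0 < |x| := zero_lt_one.trans_le hx₁
  set h := |x| ^ ((p - q) / 2) with h_def
  have h_pos : 0 < h := Real.rpow_pos_of_pos hx₀ _
  have h_le : h ≤ -x := by
    rw [← abs_of_nonpos (by linarith : x ≤ 0)]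
    exact Real.rpow_le_self_of_one_le hx₁ (by linarith)
  have interval_subset : Icc (x - h) x ⊆ Icc (2 * x) x := Icc_subset_Icc_left (by linarith)
  have landau : ‖f' x‖ ≤ 2 * (B * |x| ^ p) / h + K * |x| ^ q * h := by
    simpa only [sub_sub_cancel] using
      norm_deriv_le_of_norm_le_of_norm_deriv_two_le (sub_lt_self x h_pos)
        (right_mem_Icc.2 (sub_le_self x h_pos.le))
        (fun y hy ↦ (hfx y hy.2).hasDerivWithinAt) (fun y hy ↦ (hfx' y hy.2).hasDerivWithinAt)
        (hBx _ (interval_subset (left_mem_Icc.2 (sub_le_self x h_pos.le))))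
        (hBx _ (interval_subset (right_mem_Icc.2 (sub_le_self x h_pos.le))))
        (fun y hy ↦ hKx y (interval_subset hy))
  have rpow_div : |x| ^ p / h = |x| ^ ((p + q) / 2) := by
    rw [h_def, ← Real.rpow_sub hx₀]
    ring_nf
  have rpow_mul : |x| ^ q * h = |x| ^ ((p + q) / 2) := by
    rw [h_def, ← Real.rpow_add hx₀]
    ring_nf
  calc ‖f' x‖ ≤ 2 * (B * |x| ^ p) / h + K * |x| ^ q * h := landau
    _ = 2 * B * (|x| ^ p / h) + K * (|x| ^ q * h) := by ring
    _ = (2 * B + K) * ‖|x| ^ ((p + q) / 2)‖ := by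
      rw [rpow_div, rpow_mul, Real.norm_of_nonneg (by positivity)]
      ring

section PainleveII

variable {A : Type*} [NormedRing A] [NormedAlgebra ℝ A] {u : ℝ → A}

lemma isBigO_painleveII_rhs (α : A) (hu : u =O[atBot] fun x ↦ |x| ^ (-(1 : ℝ) / 4)) :
    (fun x ↦ x • u x + 2 * u x ^ 3 - α) =O[atBot] fun x ↦ |x| ^ ((3 : ℝ) / 4) := by
  have linear : (fun x ↦ x • u x) =O[atBot] fun x ↦ |x| ^ ((3 : ℝ) / 4) := by
    refine ((isBigO_refl (fun x : ℝ ↦ x) atBot).norm_right.smul hu).congr_right fun x ↦ ?_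
    rw [smul_eq_mul, Real.norm_eq_abs, ← Real.rpow_one_add' (abs_nonneg x) (by norm_num)]
    norm_num
  have one_isBigO : (fun _ ↦ (1 : ℝ)) =O[atBot] fun x : ℝ ↦ |x| ^ ((3 : ℝ) / 4) := by
    simpa only [Real.rpow_zero] using isBigO_abs_rpow_atBot (p := 0) (q := 3 / 4) (by norm_num)
  have bounded : u =O[atBot] fun _ ↦ (1 : ℝ) := by
    simpa only [Real.rpow_zero] using hu.trans (isBigO_abs_rpow_atBot (q := 0) (by norm_num))
  have cubic : (fun x ↦ 2 * u x ^ 3) =O[atBot] fun x ↦ |x| ^ ((3 : ℝ) / 4) :=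
    .trans (by simpa only [one_pow] using (bounded.pow 3).const_mul_left 2) one_isBigO
  have const : (fun _ ↦ α) =O[atBot] fun x : ℝ ↦ |x| ^ ((3 : ℝ) / 4) :=
    (isBigO_const_const α one_ne_zero _).trans one_isBigO
  exact (linear.add cubic).sub const

theorem stmt_1_general (α : A) (hu : ContDiff ℝ 2 u)
    (hP : ∀ᶠ x in atBot, deriv (deriv u) x = x • u x + 2 * u x ^ 3 - α)
    (hdec : u =O[atBot] fun x ↦ |x| ^ (-(1 : ℝ) / 4)) :
    ∃ C : ℝ, 0 < C ∧ ∀ x : ℝ, x ≤ 0 → ‖deriv u x‖ ≤ C * (1 + |x| ^ ((1 : ℝ) / 4)) := by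
  have hdu : ContDiff ℝ 1 (deriv u) := ((contDiff_succ_iff_deriv (n := 1)).1 hu).2.2
  have second_deriv_isBigO : deriv (deriv u) =O[atBot] fun x ↦ |x| ^ ((3 : ℝ) / 4) :=
    (isBigO_painleveII_rhs α hdec).congr' (hP.mono fun _ ↦ Eq.symm) .rfl
  have deriv_isBigO : deriv u =O[atBot] fun x ↦ |x| ^ ((1 : ℝ) / 4) := by
    rw [show (1 : ℝ) / 4 = (-1 / 4 + 3 / 4) / 2 by norm_num]
    exact isBigO_deriv_atBot_of_isBigO_rpow (by norm_num)
      (.of_forall fun x ↦ (hu.differentiable two_ne_zero x).hasDerivAt)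
      (.of_forall fun x ↦ (hdu.differentiable one_ne_zero x).hasDerivAt) hdec second_deriv_isBigO
  exact exists_norm_le_mul_one_add_abs_rpow hdu.continuous deriv_isBigO

end PainleveII

/-- If `u` solves PII with purely imaginary `α` and satisfies
`|u(y)| ≤ |y|^{-1/4}` for `y ≤ -R`, then `|u'(x)| ≤ C (1 + |x|^{1/4})` for `x ≤ 0`. -/
theorem stmt_1 (α : ℂ) (hα : α.re = 0) (u : ℝ → ℂ)
    (hu : ContDiff ℝ 2 u)
    (hP : ∀ x : ℝ, deriv (deriv u) x = (x : ℂ) * u x + 2 * (u x) ^ 3 - α)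
    (hdec : ∃ R : ℝ, 0 < R ∧ ∀ y : ℝ, y ≤ -R → ‖u y‖ ≤ |y| ^ (-(1:ℝ)/4)) :
    ∃ C : ℝ, 0 < C ∧ ∀ x : ℝ, x ≤ 0 → ‖deriv u x‖ ≤ C * (1 + |x| ^ ((1:ℝ)/4)) := by
  obtain ⟨R, -, hdecR⟩ := hdec
  exact stmt_1_general α hu (.of_forall hP)
    (.of_norm_eventuallyLE ((eventually_le_atBot (-R)).mono hdecR))
end

section
/- Let μ ∈ ℝ, set α := −iμ/2, and let u : ℝ → ℂ be a smooth solution of the PII equation u''(x) = x·u(x) + 2·u(x)³ − α on ℝ such that u(x) is purely imaginary for every x ∈ ℝ. Define w : ℝ → ℂ by w(x) := ∫₀ˣ exp( (2/3^{1/3}) ∫₀^y u(z/3^{1/3}) dz ) dy − C, where C := (2·3^{1/3}/(1−iμ))·(u'(0) − u(0)²). Then |w'(x)| = 1 for all x ∈ ℝ, and w satisfies the ordinary differential equation ((1−iμ)/3)·w(x) − (x/3)·w'(x) = −w'''(x) + (3/2)·conj(w'(x))·w''(x)² for all x ∈ ℝ. -/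
/-- The real cube root of 3. -/
noncomputable def cbrt3 : ℝ := (3 : ℝ) ^ ((1:ℝ)/3)

/-!
The derivative `E = w'` satisfies the linear equation `E' = (2/k) u(x/k) E`, where `k = 3^{1/3}`, so
`-w''' + (3/2) w''²/w'`, which is `-w'` times the Schwarzian derivative of `w`, equals
`(2/k²) M(x/k) E`, where `M = u² - u'` is the Miura transform of `u`. Painlevé II in turn gives
`(M(x/k) E)' = (α - (x/k) u(x/k)) E / k`, and therefore `(1 + 2α) w - x w' - 2k M(x/k) E` has
derivative zero. The constant of integration in `w` is the one that makes this first integral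
vanish. The imaginary values of `u` enter only through `|E| = 1`, which turns `1/w'` into `conj w'`.
-/

open Complex

theorem cbrt3_pos : 0 < cbrt3 := by
  unfold cbrt3
  positivity

theorem cbrt3_pow_three : cbrt3 ^ 3 = 3 := by
  rw [cbrt3, one_div]
  exact Real.rpow_inv_natCast_pow (n := 3) (by norm_num) (by norm_num)

theorem one_sub_I_mul_ofReal_ne_zero (μ : ℝ) : 1 - I * μ ≠ 0 := by
  intro h
  simpa using congrArg re h

theorem hasDerivAt_comp_div_const {𝕜 F : Type*} [NontriviallyNormedField 𝕜]
    [NormedAddCommGroup F] [NormedSpace 𝕜 F] {f : 𝕜 → F} {f' : F} {x : 𝕜} (k : 𝕜)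
    (hf : HasDerivAt f f' (x / k)) : HasDerivAt (fun y => f (y / k)) (k⁻¹ • f') x := by
  simpa only [one_div] using! hf.scomp x ((hasDerivAt_id x).div_const k)

/-- `IsPainleveTwo α u` says that `u` is a twice differentiable solution on the whole real line of
the second Painlevé equation with parameter `α`. -/
structure IsPainleveTwo (α : ℂ) (u : ℝ → ℂ) : Prop where
  differentiable : Differentiable ℝ u
  differentiable_deriv : Differentiable ℝ (deriv u)
  deriv_deriv (x : ℝ) : deriv (deriv u) x = x * u x + 2 * u x ^ 3 - α

/-- The Miura transform `u² - u'` of `u`. -/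
noncomputable def miura (u : ℝ → ℂ) (x : ℝ) : ℂ :=
  u x ^ 2 - deriv u x

/-- The velocity `E = w'` of the curve `w` built from `u` at the length scale `k`: the solution of
`E' = (2/k) u(y/k) E` with `E 0 = 1`. -/
noncomputable def velocity (k : ℝ) (u : ℝ → ℂ) (y : ℝ) : ℂ :=
  exp (((2 / k : ℝ) : ℂ) * ∫ z in (0 : ℝ)..y, u (z / k))

/-- The first integral at the scale `k ≠ 0` attached to a solution `u` of Painlevé II with parameter
`α` and an antiderivative `w` of `velocity k u`. -/
noncomputable def firstIntegral (α : ℂ) (k : ℝ) (u w : ℝ → ℂ) (x : ℝ) : ℂ :=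
  (1 + 2 * α) * w x - x * velocity k u x - 2 * k * (miura u (x / k) * velocity k u x)

section Velocity

variable (k : ℝ) {u : ℝ → ℂ}

theorem velocity_zero (u : ℝ → ℂ) : velocity k u 0 = 1 := by
  simp [velocity]

theorem velocity_ne_zero (u : ℝ → ℂ) (x : ℝ) : velocity k u x ≠ 0 :=
  exp_ne_zero _

theorem norm_velocity (hu : Continuous u) (x : ℝ) :
    ‖velocity k u x‖ = Real.exp (2 / k * ∫ z in (0 : ℝ)..x, (u (z / k)).re) := by
  have re_integral : ∫ z in (0 : ℝ)..x, (u (z / k)).re = (∫ z in (0 : ℝ)..x, u (z / k)).re :=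
    reCLM.intervalIntegral_comp_comm
      ((hu.comp (continuous_id.div_const k)).intervalIntegrable 0 x)
  rw [velocity, norm_exp, re_ofReal_mul, re_integral]

theorem hasDerivAt_velocity (hu : Continuous u) (x : ℝ) :
    HasDerivAt (velocity k u) (2 / k * u (x / k) * velocity k u x) x := by
  have hint : HasDerivAt (fun y => ∫ z in (0 : ℝ)..y, u (z / k)) (u (x / k)) x :=
    ((hu.comp (continuous_id.div_const k)).integral_hasStrictDerivAt 0 x).hasDerivAt
  refine (hint.const_mul ((2 / k : ℝ) : ℂ)).cexp.congr_deriv ?_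
  rw [velocity]
  push_cast
  ring

theorem deriv_velocity (hu : Continuous u) :
    deriv (velocity k u) = fun x : ℝ => 2 / k * u (x / k) * velocity k u x :=
  funext fun x => (hasDerivAt_velocity k hu x).deriv

theorem continuous_velocity (hu : Continuous u) : Continuous (velocity k u) :=
  continuous_iff_continuousAt.2 fun x => (hasDerivAt_velocity k hu x).continuousAt

theorem deriv_deriv_velocity (hu : Differentiable ℝ u) (x : ℝ) :
    deriv (deriv (velocity k u)) x =
      2 / k ^ 2 * (deriv u (x / k) + 2 * u (x / k) ^ 2) * velocity k u x := by
  have hscaled := hasDerivAt_comp_div_const k (hu (x / k)).hasDerivAt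
  have hE' : HasDerivAt (fun x : ℝ => 2 / k * u (x / k) * velocity k u x) _ x :=
    (hscaled.const_mul (2 / k : ℂ)).mul (hasDerivAt_velocity k hu.continuous x)
  rw [deriv_velocity k hu.continuous, hE'.deriv, real_smul, ofReal_inv]
  ring

theorem schwarzian_velocity (hu : Differentiable ℝ u) (x : ℝ) :
    -deriv (deriv (velocity k u)) x + 3 / 2 * deriv (velocity k u) x ^ 2 / velocity k u x =
      2 / k ^ 2 * (miura u (x / k) * velocity k u x) := by
  have hE := velocity_ne_zero k u x
  rw [deriv_deriv_velocity k hu, deriv_velocity k hu.continuous, miura]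
  field_simp
  ring

end Velocity

namespace IsPainleveTwo

variable {α : ℂ} {u w : ℝ → ℂ} {k : ℝ}

theorem hasDerivAt_miura (h : IsPainleveTwo α u) (x : ℝ) :
    HasDerivAt (miura u) (2 * u x * deriv u x - (x * u x + 2 * u x ^ 3 - α)) x := by
  rw [← h.deriv_deriv]
  simpa using!
    ((h.differentiable x).hasDerivAt.pow 2).sub (h.differentiable_deriv x).hasDerivAt

theorem hasDerivAt_miura_mul_velocity (h : IsPainleveTwo α u) (k x : ℝ) :
    HasDerivAt (fun y => miura u (y / k) * velocity k u y)
      ((α - x / k * u (x / k)) / k * velocity k u x) x := by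
  refine ((hasDerivAt_comp_div_const k (h.hasDerivAt_miura (x / k))).mul
    (hasDerivAt_velocity k h.differentiable.continuous x)).congr_deriv ?_
  rw [real_smul, miura]
  push_cast
  ring

theorem hasDerivAt_firstIntegral (h : IsPainleveTwo α u) (hk : k ≠ 0) {x : ℝ}
    (hw : HasDerivAt w (velocity k u x) x) : HasDerivAt (firstIntegral α k u w) 0 x := by
  have hkc : (k : ℂ) ≠ 0 := ofReal_ne_zero.2 hk
  refine (((hw.const_mul (1 + 2 * α)).sub ((hasDerivAt_id x).ofReal_comp.mul
    (hasDerivAt_velocity k h.differentiable.continuous x))).sub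
    ((h.hasDerivAt_miura_mul_velocity k x).const_mul (2 * k : ℂ))).congr_deriv ?_
  simp only [id_eq, ofReal_one]
  field_simp
  ring

theorem firstIntegral_eq (h : IsPainleveTwo α u) (hk : k ≠ 0)
    (hw : ∀ x, HasDerivAt w (velocity k u x) x) (x : ℝ) :
    firstIntegral α k u w x = (1 + 2 * α) * w 0 - 2 * k * miura u 0 := by
  have hderiv := fun y => h.hasDerivAt_firstIntegral hk (hw y)
  calc firstIntegral α k u w x = firstIntegral α k u w 0 :=
        is_const_of_deriv_eq_zero (fun y => (hderiv y).differentiableAt)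
          (fun y => (hderiv y).deriv) x 0
    _ = (1 + 2 * α) * w 0 - 2 * k * miura u 0 := by simp [firstIntegral, velocity_zero]

end IsPainleveTwo

theorem stmt_2_general {α : ℂ} (hα : 1 + 2 * α ≠ 0) {u : ℝ → ℂ} (h : IsPainleveTwo α u)
    {k : ℝ} (hk : k ≠ 0) {w : ℝ → ℂ}
    (hw : ∀ x, w x = (∫ y in (0 : ℝ)..x, velocity k u y) -
      2 * k / (1 + 2 * α) * (deriv u 0 - u 0 ^ 2)) :
    (∀ x : ℝ, ‖deriv w x‖ = Real.exp (2 / k * ∫ z in (0 : ℝ)..x, (u (z / k)).re)) ∧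
    ∀ x : ℝ, (1 + 2 * α) / k ^ 3 * w x - x / k ^ 3 * deriv w x =
      -deriv (deriv (deriv w)) x + 3 / 2 * deriv (deriv w) x ^ 2 / deriv w x := by
  have hu := h.differentiable.continuous
  have hw' (y : ℝ) : HasDerivAt w (velocity k u y) y := by
    rw [funext hw]
    exact ((continuous_velocity k hu).integral_hasStrictDerivAt 0 y).hasDerivAt.sub_const _
  have hw0 : (1 + 2 * α) * w 0 = 2 * k * miura u 0 := by
    rw [hw, intervalIntegral.integral_same, miura]
    field_simp
    ring
  have hfirst (x : ℝ) : (1 + 2 * α) * w x - x * velocity k u x =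
      2 * k * (miura u (x / k) * velocity k u x) := by
    have hconst := h.firstIntegral_eq hk hw' x
    rwa [hw0, sub_self, firstIntegral, sub_eq_zero] at hconst
  have hkc : (k : ℂ) ≠ 0 := ofReal_ne_zero.2 hk
  rw [funext fun y => (hw' y).deriv]
  refine ⟨norm_velocity k hu, fun x => ?_⟩
  rw [schwarzian_velocity k h.differentiable]
  field_simp
  linear_combination hfirst x

/-- The function `w` built from a purely imaginary solution of PII with `α = -iμ/2`
satisfies `|w'| = 1` and the self-similar ODE
`((1-iμ)/3) w - (x/3) w' = -w''' + (3/2) conj(w') (w'')²`. -/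
theorem stmt_2 (μ : ℝ) (α : ℂ) (hα : α = -Complex.I * μ / 2)
    (u : ℝ → ℂ) (hu : ContDiff ℝ (⊤ : ℕ∞) u)
    (hP : ∀ x : ℝ, deriv (deriv u) x = (x : ℂ) * u x + 2 * (u x) ^ 3 - α)
    (him : ∀ x : ℝ, (u x).re = 0)
    (Cc : ℂ)
    (hC : Cc = (2 * cbrt3 / (1 - Complex.I * μ)) * (deriv u 0 - (u 0) ^ 2))
    (w : ℝ → ℂ)
    (hw : ∀ x : ℝ, w x =
      (∫ y in (0:ℝ)..x, Complex.exp (((2 / cbrt3 : ℝ) : ℂ) *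
        ∫ z in (0:ℝ)..y, u (z / cbrt3))) - Cc) :
    (∀ x : ℝ, ‖deriv w x‖ = 1) ∧
    ∀ x : ℝ, ((1 - Complex.I * μ) / 3) * w x - ((x : ℂ) / 3) * deriv w x =
      -(deriv (deriv (deriv w)) x) +
        (3/2) * (starRingEnd ℂ) (deriv w x) * (deriv (deriv w) x) ^ 2 := by
  have hαμ : 1 + 2 * α = 1 - I * μ := by
    rw [hα]
    ring
  have hk : (cbrt3 : ℂ) ^ 3 = 3 := mod_cast cbrt3_pow_three
  have hu' := contDiff_infty_iff_deriv.1 hu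
  have hgen := stmt_2_general (hαμ ▸ one_sub_I_mul_ofReal_ne_zero μ)
    ⟨hu'.1, hu'.2.differentiable (by simp), hP⟩ cbrt3_pos.ne' (by rwa [hαμ, ← hC])
  rw [hαμ, hk] at hgen
  have hnorm (x : ℝ) : ‖deriv w x‖ = 1 := by simpa [him] using hgen.1 x
  refine ⟨hnorm, fun x => ?_⟩
  rw [hgen.2 x, ← inv_eq_conj (hnorm x)]
  ring
end

section
/- Let μ ∈ ℝ, set α := −iμ/2, and let u : ℝ → ℂ be a smooth solution of the PII equation u''(x) = x·u(x) + 2·u(x)³ − α on ℝ, taking purely imaginary values on ℝ and satisfying the asymptotic expansion (A+): there exist x₀, K > 0 such that |u(x) − α/x − 2α(1−α²)·x^{−4} − 4α(1−α²)(10−3α²)·x^{−7}| ≤ K·x^{−10} for all x ≥ x₀. Define w(x) := ∫₀ˣ exp( (2/3^{1/3}) ∫₀^y u(z/3^{1/3}) dz ) dy − C with C := (2·3^{1/3}/(1−iμ))·(u'(0) − u(0)²), and g(x) := e^{iμ·ln|x|}·w(x)/x for x ≠ 0. Then there exists g₊ ∈ ℂ with |g₊| = (1+μ²)^{−1/2}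 such that lim_{x→+∞} g(x) = g₊ and w'(x)·e^{iμ·ln x} = (1−iμ)·g₊ + O(x^{−3}) as x → +∞. -/
open Asymptotics Complex Filter Set Topology

section Comparison

variable {E : Type*} [NormedAddCommGroup E] [NormedSpace ℝ E] {f f' : ℝ → E} {B B' : ℝ → ℝ}

theorem norm_sub_le_sub_of_norm_deriv_le {a b : ℝ} (hab : a ≤ b)
    (hf : ∀ x ∈ Icc a b, HasDerivAt f (f' x) x) (hB : ∀ x ∈ Icc a b, HasDerivAt B (B' x) x)
    (hle : ∀ x ∈ Icc a b, ‖f' x‖ ≤ B' x) : ‖f b - f a‖ ≤ B b - B a :=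
  image_norm_le_of_norm_deriv_right_le_deriv_boundary' (f := fun x ↦ f x - f a)
    (B := fun x ↦ B x - B a)
    (fun x hx ↦ ((hf x hx).sub_const _).continuousAt.continuousWithinAt)
    (fun x hx ↦ ((hf x (Ico_subset_Icc_self hx)).sub_const _).hasDerivWithinAt) (by simp)
    (fun x hx ↦ ((hB x hx).sub_const _).continuousAt.continuousWithinAt)
    (fun x hx ↦ ((hB x (Ico_subset_Icc_self hx)).sub_const _).hasDerivWithinAt)
    (fun x hx ↦ hle x (Ico_subset_Icc_self hx)) (right_mem_Icc.2 hab)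

theorem exists_sub_isBigO_of_deriv_isBigO [CompleteSpace E]
    (hf : ∀ᶠ x in atTop, HasDerivAt f (f' x) x) (hB : ∀ᶠ x in atTop, HasDerivAt B (B' x) x)
    (hB' : ∀ᶠ x in atTop, B' x ≤ 0) (hB₀ : Tendsto B atTop (𝓝 0)) (hf' : f' =O[atTop] B') :
    ∃ L, (fun x ↦ f x - L) =O[atTop] B := by
  obtain ⟨K, hK, hbound⟩ := hf'.exists_pos
  obtain ⟨a, ha⟩ := eventually_atTop.1 (hf.and (hB.and (hB'.and hbound.bound)))
  have increment_le : ∀ {x y}, a ≤ x → x ≤ y → ‖f y - f x‖ ≤ K * (B x - B y) := fun {x y} hx hxy ↦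
    (norm_sub_le_sub_of_norm_deriv_le hxy (fun z hz ↦ (ha z (hx.trans hz.1)).1)
      (fun z hz ↦ (ha z (hx.trans hz.1)).2.1.const_mul (-K)) fun z hz ↦ by
        obtain ⟨-, -, hneg, hle⟩ := ha z (hx.trans hz.1)
        rwa [Real.norm_of_nonpos hneg, mul_neg, ← neg_mul] at hle).trans_eq (by ring)
  have B_nonneg : ∀ {x}, a ≤ x → 0 ≤ B x := fun {x} hx ↦
    le_of_tendsto hB₀ ((eventually_ge_atTop x).mono fun y hxy ↦
      sub_nonneg.1 (nonneg_of_mul_nonneg_right ((norm_nonneg _).trans (increment_le hx hxy)) hK))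
  have increment_le_left : ∀ {x y}, a ≤ x → x ≤ y → ‖f y - f x‖ ≤ K * B x := fun {x y} hx hxy ↦
    (increment_le hx hxy).trans <|
      mul_le_mul_of_nonneg_left (sub_le_self _ (B_nonneg (hx.trans hxy))) hK.le
  have cauchy : CauchySeq f := by
    refine Metric.cauchySeq_iff'.2 fun ε hε ↦ ?_
    have small : ∀ᶠ x in atTop, K * B x < ε := by
      have := hB₀.const_mul K
      rw [mul_zero] at this
      exact this.eventually_lt_const hε
    obtain ⟨N, hN, haN⟩ := (small.and (eventually_ge_atTop a)).exists
    exact ⟨N, fun y hy ↦ (dist_eq_norm (f y) (f N)).trans_lt <|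
      (increment_le_left haN hy).trans_lt hN⟩
  obtain ⟨L, hL⟩ := cauchySeq_tendsto_of_complete cauchy
  refine ⟨L, IsBigO.of_bound K ((eventually_ge_atTop a).mono fun x hx ↦ ?_)⟩
  rw [norm_sub_rev, Real.norm_of_nonneg (B_nonneg hx)]
  exact le_of_tendsto (hL.sub_const _).norm
    ((eventually_ge_atTop x).mono fun y hxy ↦ increment_le_left hx hxy)

theorem isLittleO_of_deriv_isLittleO
    (hf : ∀ᶠ x in atTop, HasDerivAt f (f' x) x) (hB : ∀ᶠ x in atTop, HasDerivAt B (B' x) x)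
    (hB' : ∀ᶠ x in atTop, 0 ≤ B' x) (hB₀ : Tendsto B atTop atTop) (hf' : f' =o[atTop] B') :
    f =o[atTop] B := by
  refine isLittleO_iff.2 fun ε hε ↦ ?_
  obtain ⟨a, ha⟩ := eventually_atTop.1
    (hf.and (hB.and (hB'.and (isLittleO_iff.1 hf' (half_pos hε)))))
  filter_upwards [eventually_ge_atTop a, hB₀.eventually_ge_atTop 0,
    (hB₀.const_mul_atTop (half_pos hε)).eventually_ge_atTop (‖f a‖ - ε / 2 * B a)]
    with x hx hBx habsorb
  have increment_le : ‖f x - f a‖ ≤ ε / 2 * B x - ε / 2 * B a :=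
    norm_sub_le_sub_of_norm_deriv_le hx (fun z hz ↦ (ha z hz.1).1)
      (fun z hz ↦ (ha z hz.1).2.1.const_mul (ε / 2)) fun z hz ↦ by
        obtain ⟨-, -, hnonneg, hle⟩ := ha z hz.1
        rwa [Real.norm_of_nonneg hnonneg] at hle
  rw [Real.norm_of_nonneg hBx]
  linarith [norm_le_norm_add_norm_sub (f a) (f x), norm_sub_rev (f a) (f x)]

end Comparison

section PowerAsymptotics

theorem cexp_mul_log_eq_cpow {x : ℝ} (hx : 0 < x) (ν : ℂ) :
    cexp (ν * Real.log x) = (x : ℂ) ^ ν := by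
  rw [cpow_def_of_ne_zero (ofReal_ne_zero.2 hx.ne'), ← ofReal_log hx.le, mul_comm]

theorem tendsto_rpow_one_sub_atTop {s : ℝ} (hs : 1 < s) :
    Tendsto (fun x : ℝ ↦ x ^ (1 - s)) atTop (𝓝 0) := by
  simpa only [neg_sub] using tendsto_rpow_neg_atTop (sub_pos.2 hs)

theorem hasDerivAt_rpow_one_sub {x : ℝ} (hx : x ≠ 0) (s : ℝ) :
    HasDerivAt (fun x : ℝ ↦ x ^ (1 - s)) ((1 - s) * x ^ (-s)) x := by
  simpa only [sub_sub_cancel_left] using Real.hasDerivAt_rpow_const (p := 1 - s) (.inl hx)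

theorem tendsto_mul_cpow_iff_isLittleO {h : ℝ → ℂ} {ν L : ℂ} :
    Tendsto (fun x : ℝ ↦ h x * (x : ℂ) ^ ν) atTop (𝓝 L) ↔
      (fun x : ℝ ↦ h x - L * (x : ℂ) ^ (-ν)) =o[atTop] fun x : ℝ ↦ x ^ (-ν.re) := by
  have cpow_ne_zero : ∀ᶠ x : ℝ in atTop, (x : ℂ) ^ ν ≠ 0 :=
    (eventually_ne_atTop 0).mono fun x hx ↦ cpow_ne_zero_iff.2 (.inl (ofReal_ne_zero.2 hx))
  have norm_cpow : (fun x : ℝ ↦ ‖(x : ℂ) ^ (-ν)‖) =ᶠ[atTop] fun x ↦ x ^ (-ν.re) :=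
    (eventually_gt_atTop 0).mono fun x hx ↦ norm_cpow_eq_rpow_re_of_pos hx (-ν)
  rw [← isLittleO_congr .rfl norm_cpow, isLittleO_norm_right, isLittleO_iff_tendsto'
    (cpow_ne_zero.mono fun x hx h₀ ↦ absurd h₀ (by rw [cpow_neg]; exact inv_ne_zero hx)),
    ← tendsto_sub_nhds_zero_iff]
  refine tendsto_congr' (cpow_ne_zero.mono fun x hx ↦ ?_)
  dsimp only
  rw [cpow_neg]
  field_simp

theorem exists_sub_isBigO_rpow_of_deriv_isBigO_rpow {E : Type*} [NormedAddCommGroup E]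
    [NormedSpace ℝ E] [CompleteSpace E] {f f' : ℝ → E} {s : ℝ} (hs : 1 < s)
    (hf : ∀ᶠ x in atTop, HasDerivAt f (f' x) x) (hf' : f' =O[atTop] fun x ↦ x ^ (-s)) :
    ∃ L, (fun x ↦ f x - L) =O[atTop] fun x ↦ x ^ (1 - s) := by
  refine exists_sub_isBigO_of_deriv_isBigO (B' := fun x ↦ (1 - s) * x ^ (-s)) hf ?_ ?_ ?_
    (hf'.const_mul_right (sub_neg.2 hs).ne)
  · exact (eventually_ne_atTop 0).mono fun x hx ↦ hasDerivAt_rpow_one_sub hx s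
  · filter_upwards [eventually_ge_atTop 0] with x hx
    exact mul_nonpos_of_nonpos_of_nonneg (sub_neg.2 hs).le (Real.rpow_nonneg hx _)
  · exact tendsto_rpow_one_sub_atTop hs

theorem exists_cexp_mul_cpow_sub_isBigO {φ v : ℝ → ℂ} {ν : ℂ} {s : ℝ} (hs : 1 < s)
    (hφ : ∀ᶠ x in atTop, HasDerivAt φ (v x) x)
    (hv : (fun x : ℝ ↦ v x + ν / x) =O[atTop] fun x ↦ x ^ (-s)) :
    ∃ L, (fun x : ℝ ↦ cexp (φ x) * (x : ℂ) ^ ν - L) =O[atTop] fun x ↦ x ^ (1 - s) := by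
  have log_deriv : ∀ᶠ x : ℝ in atTop,
      HasDerivAt (fun x : ℝ ↦ φ x + ν * Real.log x) (v x + ν / x) x := by
    filter_upwards [hφ, eventually_ne_atTop 0] with x hφx hx
    refine (hφx.add ((Real.hasDerivAt_log hx).ofReal_comp.const_mul ν)).congr_deriv ?_
    rw [ofReal_inv, ← div_eq_mul_inv]
  obtain ⟨L, hL⟩ := exists_sub_isBigO_rpow_of_deriv_isBigO_rpow hs log_deriv hv
  have log_tendsto : Tendsto (fun x : ℝ ↦ φ x + ν * Real.log x) atTop (𝓝 L) :=
    tendsto_sub_nhds_zero_iff.1 (hL.trans_tendsto (tendsto_rpow_one_sub_atTop hs))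
  refine ⟨cexp L, (((Complex.hasDerivAt_exp L).isBigO_sub.comp_tendsto log_tendsto).trans hL).congr'
    ?_ .rfl⟩
  filter_upwards [eventually_gt_atTop 0] with x hx
  simp only [Function.comp_apply, exp_add, cexp_mul_log_eq_cpow hx]

theorem tendsto_mul_cpow_sub_one_of_tendsto_deriv_mul_cpow {W W' : ℝ → ℂ} {ν L : ℂ}
    (hν : ν.re < 1) (hW : ∀ᶠ x in atTop, HasDerivAt W (W' x) x)
    (hW' : Tendsto (fun x : ℝ ↦ W' x * (x : ℂ) ^ ν) atTop (𝓝 L)) :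
    Tendsto (fun x : ℝ ↦ W x * (x : ℂ) ^ (ν - 1)) atTop (𝓝 (L / (1 - ν))) := by
  have hν₁ : 1 - ν ≠ 0 := fun h ↦ by simp [← sub_eq_zero.1 h] at hν
  have remainder_deriv : ∀ᶠ x : ℝ in atTop, HasDerivAt
      (fun x : ℝ ↦ W x - L / (1 - ν) * (x : ℂ) ^ (1 - ν)) (W' x - L * (x : ℂ) ^ (-ν)) x := by
    filter_upwards [hW, eventually_ne_atTop 0] with x hWx hx
    refine (hWx.sub ((hasDerivAt_ofReal_cpow_const hx hν₁).const_mul _)).congr_deriv ?_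
    rw [sub_sub_cancel_left, ← mul_assoc, div_mul_cancel₀ L hν₁]
  have remainder_isLittleO : (fun x : ℝ ↦ W x - L / (1 - ν) * (x : ℂ) ^ (1 - ν))
      =o[atTop] fun x : ℝ ↦ x ^ (1 - ν.re) := by
    refine isLittleO_of_deriv_isLittleO remainder_deriv
      ((eventually_ne_atTop 0).mono fun x hx ↦ hasDerivAt_rpow_one_sub hx ν.re) ?_
      (tendsto_rpow_atTop (sub_pos.2 hν))
      ((tendsto_mul_cpow_iff_isLittleO.1 hW').const_mul_right (sub_pos.2 hν).ne')
    filter_upwards [eventually_ge_atTop 0] with x hx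
    exact mul_nonneg (sub_pos.2 hν).le (Real.rpow_nonneg hx _)
  rw [tendsto_mul_cpow_iff_isLittleO]
  simpa only [neg_sub, sub_re, one_re] using remainder_isLittleO

end PowerAsymptotics

section Phase

variable {v : ℝ → ℂ}

theorem hasDerivAt_integral_cexp_integral (hv : Continuous v) (x : ℝ) :
    HasDerivAt (fun x ↦ ∫ y in (0 : ℝ)..x, cexp (∫ z in (0 : ℝ)..y, v z))
      (cexp (∫ z in (0 : ℝ)..x, v z)) x :=
  ((continuous_exp.comp (intervalIntegral.continuous_primitive hv.intervalIntegrable 0))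
    |>.integral_hasStrictDerivAt 0 x).hasDerivAt

theorem norm_cexp_integral_of_re_eq_zero (hv : Continuous v) (hre : ∀ x, (v x).re = 0) (a b : ℝ) :
    ‖cexp (∫ x in a..b, v x)‖ = 1 := by
  have integral_re := reCLM.intervalIntegral_comp_comm
    (hv.intervalIntegrable (μ := MeasureTheory.volume) a b)
  simp only [reCLM_apply, hre, intervalIntegral.integral_zero] at integral_re
  rw [norm_exp, ← integral_re, Real.exp_zero]

theorem norm_eq_one_of_cexp_integral_mul_cpow_tendsto (hv : Continuous v)
    (hre : ∀ x, (v x).re = 0) {ν L : ℂ} (hν : ν.re = 0)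
    (h : Tendsto (fun x : ℝ ↦ cexp (∫ z in (0 : ℝ)..x, v z) * (x : ℂ) ^ ν) atTop (𝓝 L)) :
    ‖L‖ = 1 := by
  refine tendsto_nhds_unique (h.norm.congr' ?_) tendsto_const_nhds
  filter_upwards [eventually_gt_atTop 0] with x hx
  rw [norm_mul, norm_cexp_integral_of_re_eq_zero hv hre, norm_cpow_eq_rpow_re_of_pos hx, hν,
    Real.rpow_zero, one_mul]

end Phase

theorem norm_one_sub_I_mul (μ : ℝ) : ‖1 - I * μ‖ = √(1 + μ ^ 2) := by
  simpa [sub_eq_add_neg, mul_comm] using norm_add_mul_I 1 (-μ)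

theorem isBigO_rescale_add_div {u : ℝ → ℂ} {α ν : ℂ} {c s : ℝ} (hc : 0 < c) (hα : 2 * α = -ν)
    (hu : (fun x : ℝ ↦ u x - α / x) =O[atTop] fun x ↦ x ^ (-s)) :
    (fun x : ℝ ↦ ((2 / c : ℝ) : ℂ) * u (x / c) + ν / x) =O[atTop] fun x ↦ x ^ (-s) := by
  have rescaled := (hu.comp_tendsto (tendsto_id.atTop_div_const hc)).const_mul_left
    ((2 / c : ℝ) : ℂ)
  refine (rescaled.congr' ?_ ?_).trans (isBigO_const_mul_self (c ^ (-s))⁻¹ _ _)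
  · filter_upwards [eventually_ne_atTop 0] with x hx
    have hxC : (x : ℂ) ≠ 0 := ofReal_ne_zero.2 hx
    have hcC : (c : ℂ) ≠ 0 := ofReal_ne_zero.2 hc.ne'
    rw [← neg_eq_iff_eq_neg.2 hα]
    simp only [Function.comp_apply, id]
    push_cast
    field_simp
    ring
  · filter_upwards [eventually_ge_atTop 0] with x hx
    simp only [Function.comp_apply, id, Real.div_rpow hx hc.le]
    exact div_eq_inv_mul _ _

theorem isBigO_rpow_atTop_iff {E : Type*} [SeminormedAddCommGroup E] {f : ℝ → E} {s : ℝ} {n : ℤ}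
    (hn : n = s) : (f =O[atTop] fun x : ℝ ↦ x ^ s) ↔
      ∃ x₀ : ℝ, 0 < x₀ ∧ ∃ K : ℝ, 0 < K ∧ ∀ x : ℝ, x₀ ≤ x → ‖f x‖ ≤ K * x ^ n := by
  simp only [← hn, Real.rpow_intCast]
  constructor
  · intro h
    obtain ⟨K, hK, hbound⟩ := h.exists_pos
    obtain ⟨x₀, hx₀⟩ := eventually_atTop.1 hbound.bound
    refine ⟨max x₀ 1, by positivity, K, hK, fun x hx ↦ ?_⟩
    have hx_pos : 0 < x := one_pos.trans_le ((le_max_right _ _).trans hx)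
    simpa only [norm_zpow, Real.norm_of_nonneg hx_pos.le] using hx₀ x ((le_max_left _ _).trans hx)
  · rintro ⟨x₀, hx₀, K, -, hbound⟩
    refine IsBigO.of_bound K ((eventually_ge_atTop x₀).mono fun x hx ↦ ?_)
    simpa only [norm_zpow, Real.norm_of_nonneg (hx₀.le.trans hx)] using hbound x hx

theorem isBigO_rpow_rpow_atTop_of_le {r s : ℝ} (hrs : r ≤ s) :
    (fun x : ℝ ↦ x ^ r) =O[atTop] fun x ↦ x ^ s := by
  refine .of_norm_eventuallyLE ((eventually_ge_atTop 1).mono fun x hx ↦ ?_)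
  exact (Real.norm_of_nonneg (Real.rpow_nonneg (zero_le_one.trans hx) r)).trans_le
    (Real.rpow_le_rpow_of_exponent_le hx hrs)

theorem isBigO_ofReal_zpow_rpow_atTop_of_le {m : ℤ} {s : ℝ} (hms : m ≤ s) :
    (fun x : ℝ ↦ (x : ℂ) ^ m) =O[atTop] fun x : ℝ ↦ x ^ s := by
  refine IsBigO.trans (.of_norm_le fun x ↦ ?_) (isBigO_rpow_rpow_atTop_of_le hms).norm_left
  rw [Real.rpow_intCast, norm_zpow, norm_zpow, norm_real]

theorem isBigO_rpow_of_sub_mul_zpow_sub_mul_zpow {f : ℝ → ℂ} {a b : ℂ} {m n : ℤ} {r s : ℝ}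
    (hm : m ≤ s) (hn : n ≤ s) (hr : r ≤ s)
    (h : (fun x : ℝ ↦ f x - a * (x : ℂ) ^ m - b * (x : ℂ) ^ n) =O[atTop] fun x ↦ x ^ r) :
    f =O[atTop] fun x ↦ x ^ s := by
  have terms := ((h.trans (isBigO_rpow_rpow_atTop_of_le hr)).add
    ((isBigO_ofReal_zpow_rpow_atTop_of_le hn).const_mul_left b)).add
    ((isBigO_ofReal_zpow_rpow_atTop_of_le hm).const_mul_left a)
  simpa only [sub_add_cancel] using terms

theorem stmt_7_general {μ c s : ℝ} {α : ℂ} (hα : α = -I * μ / 2) (hc : 0 < c) (hs : 1 < s)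
    {u : ℝ → ℂ} (hu : Continuous u) (him : ∀ x, (u x).re = 0)
    (hdecay : (fun x : ℝ ↦ u x - α / x) =O[atTop] fun x ↦ x ^ (-s)) {C : ℂ} {w : ℝ → ℂ}
    (hw : ∀ x, w x = (∫ y in (0 : ℝ)..x,
      cexp (((2 / c : ℝ) : ℂ) * ∫ z in (0 : ℝ)..y, u (z / c))) - C)
    {g : ℝ → ℂ} (hg : ∀ x ≠ 0, g x = cexp (I * μ * Real.log |x|) * w x / x) :
    ∃ gp : ℂ, ‖gp‖ = (1 + μ ^ 2) ^ (-(1 : ℝ) / 2) ∧ Tendsto g atTop (𝓝 gp) ∧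
      (fun x ↦ deriv w x * cexp (I * μ * Real.log x) - (1 - I * μ) * gp)
        =O[atTop] fun x ↦ x ^ (1 - s) := by
  set v : ℝ → ℂ := fun z ↦ ((2 / c : ℝ) : ℂ) * u (z / c) with hv_def
  have hv : Continuous v := by fun_prop
  have hv_re : ∀ x, (v x).re = 0 := fun x ↦ by rw [hv_def, re_ofReal_mul, him, mul_zero]
  have w_deriv : ∀ x, HasDerivAt w (cexp (∫ z in (0 : ℝ)..x, v z)) x := fun x ↦
    ((hasDerivAt_integral_cexp_integral hv x).sub_const C).congr_of_eventuallyEq <| .of_forall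
      fun t ↦ by simp only [hw, hv_def, intervalIntegral.integral_const_mul]
  obtain ⟨E, hE⟩ := exists_cexp_mul_cpow_sub_isBigO (ν := I * μ) hs
    (.of_forall fun x ↦ (hv.integral_hasStrictDerivAt 0 x).hasDerivAt)
    (isBigO_rescale_add_div hc (by rw [hα]; ring) hdecay)
  have E_tendsto := tendsto_sub_nhds_zero_iff.1
    (hE.trans_tendsto (tendsto_rpow_one_sub_atTop hs))
  have E_norm := norm_eq_one_of_cexp_integral_mul_cpow_tendsto hv hv_re (by simp) E_tendsto
  refine ⟨E / (1 - I * μ), ?_, ?_, hE.congr' ?_ .rfl⟩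
  · rw [norm_div, E_norm, norm_one_sub_I_mul, neg_div, Real.rpow_neg (by positivity),
      Real.sqrt_eq_rpow, one_div]
  · refine (tendsto_mul_cpow_sub_one_of_tendsto_deriv_mul_cpow (by simp)
      (.of_forall w_deriv) E_tendsto).congr' ?_
    filter_upwards [eventually_gt_atTop 0] with x hx
    rw [hg x hx.ne', abs_of_pos hx, cexp_mul_log_eq_cpow hx,
      cpow_sub _ _ (ofReal_ne_zero.2 hx.ne'), cpow_one, ← mul_div_assoc, mul_comm]
  · filter_upwards [eventually_gt_atTop 0] with x hx
    have hμ : 1 - I * μ ≠ 0 := fun h ↦ by simpa using congrArg re h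
    rw [(w_deriv x).deriv, cexp_mul_log_eq_cpow hx, mul_div_cancel₀ E hμ]

/-- There exists `g₊` with `|g₊| = (1+μ²)^{-1/2}` such that `g(x) → g₊` as `x → +∞` and
`w'(x) e^{iμ ln x} = (1-iμ) g₊ + O(x⁻³)` as `x → +∞`. -/
theorem stmt_7 (μ : ℝ) (α : ℂ) (hα : α = -Complex.I * μ / 2)
    (u : ℝ → ℂ) (hu : ContDiff ℝ (⊤ : ℕ∞) u)
    (hP : ∀ x : ℝ, deriv (deriv u) x = (x : ℂ) * u x + 2 * (u x) ^ 3 - α)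
    (him : ∀ x : ℝ, (u x).re = 0)
    (hAp : ∃ x₀ : ℝ, 0 < x₀ ∧ ∃ K : ℝ, 0 < K ∧ ∀ x : ℝ, x₀ ≤ x →
      ‖u x - α / x - 2 * α * (1 - α ^ 2) * (x : ℂ) ^ (-4 : ℤ)
        - 4 * α * (1 - α ^ 2) * (10 - 3 * α ^ 2) * (x : ℂ) ^ (-7 : ℤ)‖
        ≤ K * x ^ (-10 : ℤ))
    (Cc : ℂ)
    (hC : Cc = (2 * cbrt3 / (1 - Complex.I * μ)) * (deriv u 0 - (u 0) ^ 2))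
    (w : ℝ → ℂ)
    (hw : ∀ x : ℝ, w x =
      (∫ y in (0:ℝ)..x, Complex.exp (((2 / cbrt3 : ℝ) : ℂ) *
        ∫ z in (0:ℝ)..y, u (z / cbrt3))) - Cc)
    (g : ℝ → ℂ)
    (hg : ∀ x : ℝ, x ≠ 0 →
      g x = Complex.exp (Complex.I * μ * Real.log |x|) * w x / x) :
    ∃ gp : ℂ, ‖gp‖ = (1 + μ ^ 2) ^ (-(1:ℝ)/2) ∧
      Filter.Tendsto g Filter.atTop (nhds gp) ∧
      ∃ x₁ : ℝ, 0 < x₁ ∧ ∃ K' : ℝ, 0 < K' ∧ ∀ x : ℝ, x₁ ≤ x →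
        ‖deriv w x * Complex.exp (Complex.I * μ * Real.log x)
          - (1 - Complex.I * μ) * gp‖ ≤ K' * x ^ (-3 : ℤ) := by
  have leading_term : (fun x : ℝ ↦ u x - α / x) =O[atTop] fun x ↦ x ^ (-4 : ℝ) :=
    isBigO_rpow_of_sub_mul_zpow_sub_mul_zpow (by norm_num) (by norm_num) (by norm_num)
      ((isBigO_rpow_atTop_iff (s := -10) (by norm_num)).2 hAp)
  obtain ⟨gp, hnorm, hlim, hO⟩ := stmt_7_general hα (by unfold cbrt3; positivity) (by norm_num)
    hu.continuous him leading_term hw hg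
  exact ⟨gp, hnorm, hlim, (isBigO_rpow_atTop_iff (by norm_num)).1 hO⟩
end
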